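/- arXiv:1605.03934 — 4 statements merged into one kernel-verified Lean document; each statement's English description precedes it below -/
import Mathlib

section
/- Let R be a commutative ring and s ∈ R. An R-module C is an s-contramodule (i.e., Hom_R(R[s⁻¹], C) = 0 = Ext¹_R(R[s⁻¹], C)) if and only if for every sequence a₀, a₁, a₂, … ∈ C the system bₙ − s·bₙ₊₁ = aₙ (n ≥ 0) has a unique solution (bₙ) in C. -/
open CategoryTheory Opposite

/-!
As an `R`-module, `R[s⁻¹] = R[X]/(1 - sX)` has the free resolution
`0 → R[X] → R[X] → R[s⁻¹] → 0` whose first map is multiplication by `1 - sX`. Hence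
`Hom(R[s⁻¹], C)` and `Ext¹(R[s⁻¹], C)` are the kernel and the cokernel of precomposition with this
map on `Hom(R[X], C)`. Evaluating on monomials identifies `Hom(R[X], C)` with sequences `b` in `C`
and precomposition with `b ↦ (bₙ - s bₙ₊₁)ₙ`, so both groups vanish exactly when that map is
bijective.
-/

universe w v u

section Ext

variable {k : Type*} [Ring k] {A : Type u} [Category.{v} A] [Abelian A] [Linear k A]

theorem subsingleton_ext_succ_iff_of_projectiveResolution [EnoughProjectives A] {X : A}
    (P : ProjectiveResolution X) (Y : A) (n : ℕ) :
    Subsingleton (((Ext k A (n + 1)).obj (op X)).obj Y) ↔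
      ∀ f : P.complex.X (n + 1) ⟶ Y, P.complex.d (n + 2) (n + 1) ≫ f = 0 →
        ∃ g : P.complex.X n ⟶ Y, P.complex.d (n + 1) n ≫ g = f := by
  rw [← ModuleCat.isZero_iff_subsingleton, (P.isoExt (n + 1) Y).isZero_iff,
    ← HomologicalComplex.exactAt_iff_isZero_homology,
    HomologicalComplex.exactAt_iff' _ n (n + 1) (n + 2) (by simp) (by simp),
    ShortComplex.moduleCat_exact_iff]
  rfl

theorem subsingleton_abelianExt_succ_iff_of_projectiveResolution [HasExt.{w} A] {X : A}
    (P : ProjectiveResolution X) (Y : A) (n : ℕ) :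
    Subsingleton (Abelian.Ext.{w} X Y (n + 1)) ↔
      ∀ f : P.complex.X (n + 1) ⟶ Y, P.complex.d (n + 2) (n + 1) ≫ f = 0 →
        ∃ g : P.complex.X n ⟶ Y, P.complex.d (n + 1) n ≫ g = f := by
  constructor
  · intro _ f hf
    exact (P.extMk_eq_zero_iff f (n + 2) rfl hf n rfl).1 (Subsingleton.elim _ _)
  · intro h
    refine subsingleton_of_forall_eq 0 fun α ↦ ?_
    obtain ⟨f, hf, rfl⟩ := P.extMk_surjective α (n + 2) rfl
    exact (P.extMk_eq_zero_iff f (n + 2) rfl hf n rfl).2 (h f hf)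

theorem subsingleton_ext_succ_iff_abelianExt [EnoughProjectives A] [HasExt.{w} A] (X Y : A)
    (n : ℕ) :
    Subsingleton (((Ext k A (n + 1)).obj (op X)).obj Y) ↔
      Subsingleton (Abelian.Ext.{w} X Y (n + 1)) :=
  (subsingleton_ext_succ_iff_of_projectiveResolution (projectiveResolution X) Y n).trans
    (subsingleton_abelianExt_succ_iff_of_projectiveResolution (projectiveResolution X) Y n).symm

theorem subsingleton_abelianExt_one_iff_of_shortExact [HasExt.{w} A] {T : ShortComplex A}
    (hT : T.ShortExact) [Projective T.X₂] (Y : A) :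
    Subsingleton (Abelian.Ext.{w} T.X₃ Y 1) ↔
      Function.Surjective fun g : T.X₂ ⟶ Y ↦ T.f ≫ g := by
  constructor
  · intro _ f
    obtain ⟨β, hβ⟩ := Abelian.Ext.contravariant_sequence_exact₁ hT Y (Abelian.Ext.mk₀ f) rfl
      (Subsingleton.elim _ _)
    obtain ⟨g, rfl⟩ := (Abelian.Ext.mk₀_bijective _ _).surjective β
    refine ⟨g, (Abelian.Ext.mk₀_bijective _ _).injective ?_⟩
    rw [← hβ, Abelian.Ext.mk₀_comp_mk₀]
  · intro h
    refine subsingleton_of_forall_eq 0 fun α ↦ ?_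
    obtain ⟨β, rfl⟩ := Abelian.Ext.contravariant_sequence_exact₃ hT Y α
      (Abelian.Ext.eq_zero_of_projective _) (add_zero 1)
    obtain ⟨f, rfl⟩ := (Abelian.Ext.mk₀_bijective _ _).surjective β
    obtain ⟨g, rfl⟩ := h f
    rw [← Abelian.Ext.mk₀_comp_mk₀, hT.extClass_comp_assoc]

end Ext

section Module

variable {R : Type u} [CommRing R]

theorem subsingleton_linearMap_iff_injective_lcomp {M₁ M₂ M₃ : Type*}
    [AddCommGroup M₁] [Module R M₁] [AddCommGroup M₂] [Module R M₂] [AddCommGroup M₃] [Module R M₃]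
    {f : M₁ →ₗ[R] M₂} {g : M₂ →ₗ[R] M₃} (hfg : Function.Exact f g) (hg : Function.Surjective g)
    (N : Type*) [AddCommGroup N] [Module R N] :
    Subsingleton (M₃ →ₗ[R] N) ↔ Function.Injective (f.lcomp R N) := by
  have h_inj : Function.Injective (g.lcomp R N) := LinearMap.lcomp_injective_of_surjective g hg
  have h_ker := (LinearMap.exact_lcomp_of_exact_of_surjective N hfg hg).linearMap_ker_eq
  rw [← LinearMap.ker_eq_bot, h_ker, LinearMap.range_eq_bot]
  constructor
  · intro _
    exact Subsingleton.elim _ _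
  · intro h
    exact subsingleton_of_forall_eq 0 fun φ ↦ h_inj (by rw [h, LinearMap.zero_apply, map_zero])

theorem subsingleton_ext_one_iff_surjective_lcomp [Small.{v} R] {M₁ M₂ M₃ : Type v}
    [AddCommGroup M₁] [Module R M₁] [AddCommGroup M₂] [Module R M₂] [Module.Projective R M₂]
    [AddCommGroup M₃] [Module R M₃] {f : M₁ →ₗ[R] M₂} {g : M₂ →ₗ[R] M₃}
    (hf : Function.Injective f) (hfg : Function.Exact f g) (hg : Function.Surjective g)
    (N : Type v) [AddCommGroup N] [Module R N] :
    Subsingleton (((Ext R (ModuleCat.{v} R) 1).obj (op (.of R M₃))).obj (.of R N)) ↔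
      Function.Surjective (f.lcomp R N) := by
  let T : ShortComplex (ModuleCat.{v} R) :=
    ModuleCat.shortComplexOfCompEqZero f g hfg.linearMap_comp_eq_zero
  have hT : T.ShortExact := ModuleCat.shortComplex_shortExact T hfg hf hg
  have : Projective T.X₂ := (IsProjective.iff_projective M₂).1 inferInstance
  let e (M : ModuleCat.{v} R) : (M ⟶ .of R N) ≃ (M →ₗ[R] N) := ModuleCat.homEquiv
  have h_comm : f.lcomp R N ∘ e T.X₂ = e T.X₁ ∘ fun φ ↦ T.f ≫ φ := rfl
  rw [subsingleton_ext_succ_iff_abelianExt.{v}, ← (e T.X₂).surjective_comp, h_comm,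
    (e T.X₁).comp_surjective]
  exact subsingleton_abelianExt_one_iff_of_shortExact hT (.of R N)

end Module

section Telescope

open Polynomial

variable {R : Type*} [CommRing R] (s : R)

theorem injective_mulLeft_one_sub_C_mul_X :
    Function.Injective (LinearMap.mulLeft R (1 - C s * X : R[X])) := by
  have h : (1 - C s * X : R[X]) ∈ nonZeroDivisors R[X] :=
    mem_nonzeroDivisors_of_coeff_mem 0 (by simp)
  rw [injective_iff_map_eq_zero]
  intro p hp
  exact (mul_left_mem_nonZeroDivisors_eq_zero_iff h).1 hp

theorem exists_surjective_exact_mulLeft_one_sub_C_mul_X (S : Type*) [CommRing S]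
    [Algebra R S] [IsLocalization.Away s S] :
    ∃ π : R[X] →ₗ[R] S, Function.Surjective π ∧
      Function.Exact (LinearMap.mulLeft R (1 - C s * X : R[X])) π := by
  have := IsLocalization.adjoin_inv s
  let e : AdjoinRoot (C s * X - 1) ≃ₐ[R] S := IsLocalization.algEquiv (.powers s) _ S
  refine ⟨e.toLinearMap ∘ₗ (AdjoinRoot.mkₐ (C s * X - 1)).toLinearMap,
    e.surjective.comp AdjoinRoot.mk_surjective, fun p ↦ ?_⟩
  have : e (AdjoinRoot.mk _ p) = 0 ↔ 1 - C s * X ∣ p := by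
    rw [EmbeddingLike.map_eq_zero_iff, AdjoinRoot.mk_eq_zero, ← neg_dvd, neg_sub]
  simpa [dvd_def, eq_comm] using this

theorem lcomp_mulLeft_constr_basisMonomials {N : Type*} [AddCommGroup N] [Module R N]
    (b : ℕ → N) :
    (LinearMap.mulLeft R (1 - C s * X)).lcomp R N ((basisMonomials R).constr R b) =
      (basisMonomials R).constr R fun n ↦ b n - s • b (n + 1) := by
  refine (basisMonomials R).ext fun n ↦ ?_
  have h : (1 - C s * X) * monomial n (1 : R) = monomial n 1 - s • monomial (n + 1) 1 := by
    rw [sub_mul, one_mul, mul_assoc, X_mul_monomial, ← smul_eq_C_mul]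
  have h_constr (c : ℕ → N) (m : ℕ) : (basisMonomials R).constr R c (monomial m 1) = c m := by
    simpa using (basisMonomials R).constr_basis R c m
  simp [h, h_constr]

theorem bijective_lcomp_mulLeft_iff (N : Type*) [AddCommGroup N] [Module R N] :
    Function.Bijective ((LinearMap.mulLeft R (1 - C s * X : R[X])).lcomp R N) ↔
      ∀ a : ℕ → N, ∃! b : ℕ → N, ∀ n, b n - s • b (n + 1) = a n := by
  let e : (ℕ → N) ≃ (R[X] →ₗ[R] N) := ((basisMonomials R).constr R).toEquiv
  have h_comm : (LinearMap.mulLeft R (1 - C s * X)).lcomp R N ∘ e =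
      e ∘ fun b n ↦ b n - s • b (n + 1) :=
    funext (lcomp_mulLeft_constr_basisMonomials s)
  rw [← e.bijective_comp, h_comm, e.comp_bijective, Function.bijective_iff_existsUnique]
  simp only [funext_iff]

end Telescope

theorem isSContramodule_iff_equation_system_uniquely_solvable_general {R : Type u} [CommRing R]
    (s : R) (S : Type u) [CommRing S] [Algebra R S] [IsLocalization.Away s S]
    (N : Type u) [AddCommGroup N] [Module R N] :
    (Subsingleton (S →ₗ[R] N) ∧
      Subsingleton (((Ext R (ModuleCat R) 1).obj (op (ModuleCat.of R S))).obj
        (ModuleCat.of R N))) ↔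
      ∀ a : ℕ → N, ∃! b : ℕ → N, ∀ n : ℕ, b n - s • b (n + 1) = a n := by
  obtain ⟨π, hπ, h_exact⟩ := exists_surjective_exact_mulLeft_one_sub_C_mul_X s S
  rw [subsingleton_linearMap_iff_injective_lcomp h_exact hπ,
    subsingleton_ext_one_iff_surjective_lcomp (injective_mulLeft_one_sub_C_mul_X s) h_exact hπ]
  exact bijective_lcomp_mulLeft_iff s N

/-- For a commutative ring `R`, an element `s ∈ R`, and an `R`-module `C`,
`C` is an `s`-contramodule (`Hom_R(R[s⁻¹],C) = 0 = Ext¹_R(R[s⁻¹],C)`) if and only if every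
infinite system of equations `bₙ - s·bₙ₊₁ = aₙ` (n ≥ 0) has a unique solution in `C`. -/
theorem isSContramodule_iff_equation_system_uniquely_solvable
    (R : Type) [CommRing R] (s : R) (C : Type) [AddCommGroup C] [Module R C] :
    (Subsingleton (Localization.Away s →ₗ[R] C) ∧
      Subsingleton (((Ext R (ModuleCat R) 1).obj
        (op (ModuleCat.of R (Localization.Away s)))).obj (ModuleCat.of R C))) ↔
      ∀ a : ℕ → C, ∃! b : ℕ → C, ∀ n : ℕ, b n - s • b (n + 1) = a n :=
  isSContramodule_iff_equation_system_uniquely_solvable_general s (Localization.Away s) C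
end

section
/- Let R be a commutative ring, s ∈ R, and C an R-module on which s acts injectively (C is s-torsion-free). If the natural map C → lim_n C/sⁿC is surjective, then Ext¹_R(R[s⁻¹], C) = 0. -/
open CategoryTheory Opposite

/-!
With `t = s * X - 1`, the sequence `R[X] → R[X] → R[s⁻¹] → 0`, whose first map is multiplication
by `t`, presents `R[s⁻¹]` by free modules. Linear maps `R[X] → C` are sequences in `C`, so
`Ext¹(R[s⁻¹], C)` vanishes as soon as every recursion `x n = s • x (n + 1) + c n` has a solution in
`C`. Formally `x n = ∑ k, s ^ k • c (n + k)`. Completeness provides a limit `L` of the partial sums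
for `n = 0`, and `x n` is then the quotient by `s ^ n` of `L - ∑ k < n, s ^ k • c k`;
torsion-freeness makes these quotients satisfy the recursion.
-/

universe v u

section Presentation

variable {R : Type*} [Ring R] {M N P : Type*} [AddCommGroup M] [AddCommGroup N] [AddCommGroup P]
  [Module R M] [Module R N] [Module R P]

theorem exists_comp_eq_of_surjective_of_ker_le {p : M →ₗ[R] N} (hp : Function.Surjective p)
    {f : M →ₗ[R] P} (hf : LinearMap.ker p ≤ LinearMap.ker f) : ∃ g : N →ₗ[R] P, g ∘ₗ p = f := by
  refine ⟨(LinearMap.ker p).liftQ f hf ∘ₗ (p.quotKerEquivOfSurjective hp).symm, ?_⟩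
  ext x
  have : (p.quotKerEquivOfSurjective hp).symm (p x) = Submodule.Quotient.mk x :=
    (LinearEquiv.symm_apply_eq _).2 rfl
  simp [this]

theorem surjective_coprod_of_exact {F L : Type*} [AddCommGroup F] [AddCommGroup L] [Module R F]
    [Module R L] {d : L →ₗ[R] N} {q : N →ₗ[R] M} (hdq : Function.Exact d q) {φ : F →ₗ[R] N}
    (hqφ : Function.Surjective (q ∘ₗ φ)) : Function.Surjective (φ.coprod d) := fun y ↦ by
  obtain ⟨x, hx⟩ := hqφ (q y)
  obtain ⟨a, ha⟩ := (hdq (y - φ x)).1 (by rw [map_sub, ← hx, LinearMap.comp_apply, sub_self])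
  exact ⟨(x, a), by simp [ha]⟩

/-- A form of Schanuel's lemma: whether the maps out of the relations of a presentation extend to
the generators can be tested on any presentation with projective generators. -/
theorem exists_comp_eq_of_exact_of_projective {K F L Q C : Type*}
    [AddCommGroup K] [AddCommGroup F] [AddCommGroup L] [AddCommGroup Q] [AddCommGroup C]
    [Module R K] [Module R F] [Module R L] [Module R Q] [Module R C] [Module.Projective R F]
    {i : K →ₗ[R] F} {p : F →ₗ[R] M} (hip : Function.Exact i p) (hp : Function.Surjective p)
    (hext : ∀ f : K →ₗ[R] C, ∃ g : F →ₗ[R] C, g ∘ₗ i = f)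
    {d : L →ₗ[R] Q} {q : Q →ₗ[R] M} (hdq : Function.Exact d q) (hq : Function.Surjective q)
    {f : L →ₗ[R] C} (hf : LinearMap.ker d ≤ LinearMap.ker f) :
    ∃ g : Q →ₗ[R] C, g ∘ₗ d = f := by
  obtain ⟨φ, hφ⟩ := Module.projective_lifting_property q p hq
  have hφ_apply (x : F) : q (φ x) = p x := LinearMap.congr_fun hφ x
  have hφi (k : K) : φ (i k) ∈ LinearMap.range d :=
    (hdq _).1 (by rw [hφ_apply, hip.apply_apply_eq_zero])
  obtain ⟨f', hf'⟩ := exists_comp_eq_of_surjective_of_ker_le d.surjective_rangeRestrict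
    (f := f) (by rwa [LinearMap.ker_rangeRestrict])
  obtain ⟨h, hh⟩ := hext (f' ∘ₗ (φ ∘ₗ i).codRestrict (LinearMap.range d) hφi)
  -- `φ.coprod d` presents `Q` as a quotient of `F × L`, so it suffices that `h.coprod f` descends.
  have hker : LinearMap.ker (φ.coprod d) ≤ LinearMap.ker (h.coprod f) := by
    rintro ⟨x, a⟩ hxa
    replace hxa : φ x + d a = 0 := by simpa using hxa
    obtain ⟨k, rfl⟩ := (hip x).1 (by
      rw [← hφ_apply, eq_neg_of_add_eq_zero_left hxa, map_neg, hdq.apply_apply_eq_zero, neg_zero])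
    have hcod : (φ ∘ₗ i).codRestrict (LinearMap.range d) hφi k = -d.rangeRestrict a :=
      Subtype.ext (eq_neg_of_add_eq_zero_left hxa)
    have hhk : h (i k) = -f a := by
      rw [← hf']
      simpa [hcod] using LinearMap.congr_fun hh k
    simp [hhk]
  obtain ⟨g, hg⟩ := exists_comp_eq_of_surjective_of_ker_le
    (surjective_coprod_of_exact hdq (φ := φ) (hφ ▸ hp)) hker
  exact ⟨g, by rw [← LinearMap.coprod_inr φ d, ← LinearMap.comp_assoc, hg, LinearMap.coprod_inr]⟩

end Presentation

theorem subsingleton_ext_one_of_exact_of_projective {R : Type u} [CommRing R] [Small.{v} R]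
    {M C : Type v} [AddCommGroup M] [Module R M] [AddCommGroup C] [Module R C]
    {K F : Type*} [AddCommGroup K] [AddCommGroup F] [Module R K] [Module R F]
    [Module.Projective R F] {i : K →ₗ[R] F} {p : F →ₗ[R] M}
    (hip : Function.Exact i p) (hp : Function.Surjective p)
    (hext : ∀ f : K →ₗ[R] C, ∃ g : F →ₗ[R] C, g ∘ₗ i = f) :
    Subsingleton (((Ext R (ModuleCat.{v} R) 1).obj (op (ModuleCat.of R M))).obj
      (ModuleCat.of R C)) := by
  let P := projectiveResolution (ModuleCat.of R M)
  have hd : Function.Exact (P.complex.d 2 1).hom (P.complex.d 1 0).hom :=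
    (ShortComplex.ShortExact.moduleCat_exact_iff_function_exact _).1 (P.exact_succ 0)
  have hπ : Function.Exact (P.complex.d 1 0).hom (P.π.f 0).hom :=
    (ShortComplex.ShortExact.moduleCat_exact_iff_function_exact _).1 P.exact₀
  have hπ_surj : Function.Surjective (P.π.f 0).hom :=
    (ModuleCat.epi_iff_surjective _).1 inferInstance
  rw [← ModuleCat.isZero_iff_subsingleton]
  refine Limits.IsZero.of_iso ?_ (P.isoExt 1 (ModuleCat.of R C))
  rw [← HomologicalComplex.exactAt_iff_isZero_homology,
    HomologicalComplex.exactAt_iff' _ 0 1 2 (by simp) (by simp), ShortComplex.moduleCat_exact_iff]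
  intro (f : P.complex.X 1 ⟶ ModuleCat.of R C) (hf : P.complex.d 2 1 ≫ f = 0)
  have hker : LinearMap.ker (P.complex.d 1 0).hom ≤ LinearMap.ker f.hom := by
    rw [hd.linearMap_ker_eq, LinearMap.range_le_ker_iff, ← ModuleCat.hom_comp, hf,
      ModuleCat.hom_zero]
  obtain ⟨g, hg⟩ := exists_comp_eq_of_exact_of_projective hip hp hext hπ hπ_surj hker
  exact ⟨ModuleCat.ofHom g, ModuleCat.hom_ext hg⟩

section Away

open Polynomial

variable {R : Type*} [CommRing R]

theorem exact_mulLeft_adjoinRoot_mk (t : R[X]) :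
    Function.Exact (LinearMap.mulLeft R t) (AdjoinRoot.mkₐ t).toLinearMap := fun _ ↦
  AdjoinRoot.mk_eq_zero.trans <| exists_congr fun _ ↦ eq_comm

theorem exists_surjective_exact_mulLeft_away (s : R) (A : Type*) [CommRing A] [Algebra R A]
    [IsLocalization.Away s A] :
    ∃ p : R[X] →ₗ[R] A, Function.Surjective p ∧
      Function.Exact (LinearMap.mulLeft R (C s * X - 1)) p := by
  have := IsLocalization.adjoin_inv s
  let e : AdjoinRoot (C s * X - 1) ≃ₐ[R] A := IsLocalization.algEquiv (Submonoid.powers s) _ _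
  exact ⟨e.toLinearMap ∘ₗ (AdjoinRoot.mkₐ (C s * X - 1)).toLinearMap,
    e.surjective.comp AdjoinRoot.mk_surjective,
    (exact_mulLeft_adjoinRoot_mk _).comp_injective e e.injective (map_zero e)⟩

theorem exists_comp_mulLeft_eq_of_forall_exists_recursion {s : R} {M : Type*} [AddCommGroup M]
    [Module R M] (hs : ∀ c : ℕ → M, ∃ x : ℕ → M, ∀ n, x n = s • x (n + 1) + c n)
    (f : R[X] →ₗ[R] M) : ∃ g : R[X] →ₗ[R] M, g ∘ₗ LinearMap.mulLeft R (C s * X - 1) = f := by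
  obtain ⟨x, hx⟩ := hs fun n ↦ -f (X ^ n)
  have hbasis (n : ℕ) : basisMonomials R n = X ^ n := by
    simp [X_pow_eq_monomial]
  let g : R[X] →ₗ[R] M := (basisMonomials R).constr R x
  have hg (n : ℕ) : g (X ^ n) = x n := by
    rw [← hbasis, Module.Basis.constr_basis]
  refine ⟨g, (basisMonomials R).ext fun n ↦ ?_⟩
  have hmul : (C s * X - 1) * X ^ n = s • X ^ (n + 1) - X ^ n := by
    rw [smul_eq_C_mul]
    ring
  rw [hbasis, LinearMap.comp_apply, LinearMap.mulLeft_apply, hmul, map_sub, map_smul, hg, hg, hx n]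
  abel

end Away

section Complete

variable {R M : Type*} [CommRing R] [AddCommGroup M] [Module R M]

theorem mem_span_singleton_pow_smul_top_iff (s : R) (n : ℕ) (y : M) :
    y ∈ (Ideal.span {s} ^ n • ⊤ : Submodule R M) ↔ ∃ z, s ^ n • z = y := by
  simp [Ideal.span_singleton_pow, Submodule.ideal_span_singleton_smul,
    Submodule.mem_smul_pointwise_iff_exists]

theorem exists_sub_sum_range_eq_pow_smul (s : R) [IsPrecomplete (Ideal.span {s}) M] (c : ℕ → M) :
    ∃ L : M, ∀ n, ∃ z, s ^ n • z = L - ∑ k ∈ Finset.range n, s ^ k • c k := by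
  have hcauchy : AdicCompletion.IsAdicCauchy (Ideal.span {s}) M
      fun n ↦ ∑ k ∈ Finset.range n, s ^ k • c k := by
    rw [AdicCompletion.isAdicCauchy_iff]
    intro n
    rw [SModEq.comm, SModEq.sub_mem, Finset.sum_range_succ_sub_sum,
      mem_span_singleton_pow_smul_top_iff]
    exact ⟨c n, rfl⟩
  obtain ⟨L, hL⟩ := IsPrecomplete.prec ‹_› hcauchy
  exact ⟨L, fun n ↦ (mem_span_singleton_pow_smul_top_iff ..).1 (SModEq.sub_mem.1 (hL n).symm)⟩

theorem exists_recursion_of_isSMulRegular {s : R} (hs : IsSMulRegular M s)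
    [IsPrecomplete (Ideal.span {s}) M] (c : ℕ → M) :
    ∃ x : ℕ → M, ∀ n, x n = s • x (n + 1) + c n := by
  obtain ⟨L, hL⟩ := exists_sub_sum_range_eq_pow_smul s c
  choose x hx using hL
  refine ⟨x, fun n ↦ hs.pow n ?_⟩
  calc s ^ n • x n = (L - ∑ k ∈ Finset.range (n + 1), s ^ k • c k) + s ^ n • c n := by
        rw [hx, Finset.sum_range_succ]
        abel
    _ = s ^ n • (s • x (n + 1) + c n) := by rw [← hx, pow_succ, mul_smul, smul_add]

end Complete

theorem sTorsionFree_sComplete_implies_sContraadjusted_general {R : Type u} [CommRing R]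
    [Small.{v} R] (s : R) (A : Type v) [CommRing A] [Algebra R A] [IsLocalization.Away s A]
    (C : Type v) [AddCommGroup C] [Module R C] (htf : IsSMulRegular C s)
    [IsPrecomplete (Ideal.span {s}) C] :
    Subsingleton (((Ext R (ModuleCat.{v} R) 1).obj (op (ModuleCat.of R A))).obj
      (ModuleCat.of R C)) := by
  obtain ⟨p, hp, hexact⟩ := exists_surjective_exact_mulLeft_away s A
  exact subsingleton_ext_one_of_exact_of_projective hexact hp <|
    exists_comp_mulLeft_eq_of_forall_exists_recursion <| exists_recursion_of_isSMulRegular htf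

/-- Over a commutative ring `R`, if an `R`-module `C` is `s`-torsion-free
(multiplication by `s` is injective) and the natural map `C → lim_n C/sⁿC` is surjective,
then `Ext¹_R(R[s⁻¹], C) = 0`. -/
theorem sTorsionFree_sComplete_implies_sContraadjusted
    (R : Type) [CommRing R] (s : R) (C : Type) [AddCommGroup C] [Module R C]
    (htf : Function.Injective (fun x : C => s • x))
    (hcomp : Function.Surjective (AdicCompletion.of (Ideal.span {s}) C)) :
    Subsingleton (((Ext R (ModuleCat R) 1).obj
      (op (ModuleCat.of R (Localization.Away s)))).obj (ModuleCat.of R C)) :=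
  have := AdicCompletion.of_surjective_iff.1 hcomp
  sTorsionFree_sComplete_implies_sContraadjusted_general s (Localization.Away s) C htf
end

section
/- Let R be a commutative ring, C an R-module, and I_C = { s ∈ R : C is an s-contramodule }. Then I_C is an ideal of R; moreover I_C is a radical ideal (if sⁿ ∈ I_C for some n ≥ 1, then s ∈ I_C). -/
open CategoryTheory Opposite

/-- `C` is an `s`-contramodule over the commutative ring `R`:
`Hom_R(R[s⁻¹],C) = 0 = Ext¹_R(R[s⁻¹],C)`. -/
def IsContramodule (R : Type) [CommRing R] (s : R) (C : Type) [AddCommGroup C]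
    [Module R C] : Prop :=
  Subsingleton (Localization.Away s →ₗ[R] C) ∧
    Subsingleton (((Ext R (ModuleCat R) 1).obj
      (op (ModuleCat.of R (Localization.Away s)))).obj (ModuleCat.of R C))

/-!
Multiplication by `1 - s X` on `R[X]` is injective with cokernel `R[s⁻¹]`, so it resolves `R[s⁻¹]`
by free modules. Applying `Hom_R(-, C)` shows that `C` is an `s`-contramodule if and only if the
operator `(bₙ) ↦ (bₙ - s bₙ₊₁)` on sequences in `C` is bijective, and this happens if and only if
`C` admits a linear summation `a ↦ ∑ sⁿ aₙ`, characterised by `∑ sⁿ aₙ = a₀ + s ∑ sⁿ aₙ₊₁`.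
Such summations can be manipulated like power series: rescaling the sequence gives
`∑ (rs)ⁿ aₙ = ∑ sⁿ (rⁿ aₙ)`, grouping into blocks of length `m` recovers `∑ sⁿ aₙ` from a summation
for `s ^ m`, and the binomial theorem gives
`∑ (s + t)ⁿ aₙ = ∑ᵢ sⁱ ∑ⱼ tʲ binom(i + j, i) aᵢ₊ⱼ`.
-/

section PowerSummation

variable {R C : Type*} [CommRing R] [AddCommGroup C] [Module R C]

/-- `C` admits an `s`-power infinite summation, i.e. a linear operation assigning to a sequence `a`
in `C` a value for the formal expression `∑ sⁿ aₙ`. -/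
def HasPowerSummation (s : R) (C : Type*) [AddCommGroup C] [Module R C] : Prop :=
  ∃ L : (ℕ → C) →ₗ[R] C, ∀ a : ℕ → C, L a = a 0 + s • L fun n ↦ a (n + 1)

/-- The `i`-th row `j ↦ binom(i + j, i) aᵢ₊ⱼ` of the two-dimensional array obtained by expanding
`∑ (s + t)ⁿ aₙ` into multiples of the monomials `sⁱ tʲ`. -/
def binomialRow (R C : Type*) [CommRing R] [AddCommGroup C] [Module R C] (i : ℕ) :
    (ℕ → C) →ₗ[R] ℕ → C :=
  LinearMap.pi fun j ↦ ((i + j).choose i : R) • LinearMap.proj (i + j)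

lemma binomialRow_apply (i : ℕ) (a : ℕ → C) (j : ℕ) :
    binomialRow R C i a j = ((i + j).choose i : R) • a (i + j) := rfl

lemma binomialRow_zero (a : ℕ → C) : binomialRow R C 0 a = a := by
  ext j
  simp [binomialRow_apply]

lemma binomialRow_apply_zero (i : ℕ) (a : ℕ → C) : binomialRow R C i a 0 = a i := by
  simp [binomialRow_apply]

lemma binomialRow_succ_apply_succ (i : ℕ) (a : ℕ → C) (j : ℕ) :
    binomialRow R C (i + 1) a (j + 1) =
      binomialRow R C i (fun n ↦ a (n + 1)) (j + 1) +
        binomialRow R C (i + 1) (fun n ↦ a (n + 1)) j := by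
  have pascal : (i + j + 1 + 1).choose (i + 1) =
      (i + j + 1).choose i + (i + j + 1).choose (i + 1) := Nat.choose_succ_succ _ _
  simp only [binomialRow_apply, ← add_assoc, add_right_comm i 1, pascal, Nat.cast_add, add_smul]

namespace HasPowerSummation

variable {s t : R}

lemma zero (R C : Type*) [CommRing R] [AddCommGroup C] [Module R C] :
    HasPowerSummation (0 : R) C :=
  ⟨LinearMap.proj 0, fun a ↦ by simp⟩

lemma mul_left (r : R) (hs : HasPowerSummation s C) : HasPowerSummation (r * s) C := by
  obtain ⟨L, hL⟩ := hs
  refine ⟨L ∘ₗ LinearMap.pi fun n ↦ r ^ n • LinearMap.proj n, fun a ↦ ?_⟩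
  have rescale_tail : (fun n ↦ r ^ (n + 1) • a (n + 1)) = r • fun n ↦ r ^ n • a (n + 1) := by
    ext n
    simp [pow_succ', mul_smul]
  calc L (fun n ↦ r ^ n • a n)
    _ = a 0 + s • L (fun n ↦ r ^ (n + 1) • a (n + 1)) := by simpa using hL fun n ↦ r ^ n • a n
    _ = a 0 + (r * s) • L (fun n ↦ r ^ n • a (n + 1)) := by
      rw [rescale_tail, map_smul, smul_smul, mul_comm]

lemma of_pow (m : ℕ) (hs : HasPowerSummation (s ^ m) C) : HasPowerSummation s C := by
  obtain ⟨L, hL⟩ := hs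
  let block : (ℕ → C) →ₗ[R] ℕ → C :=
    LinearMap.pi fun n ↦ ∑ i ∈ Finset.range m, s ^ i • LinearMap.proj (m * n + i)
  have block_apply (a : ℕ → C) (n : ℕ) :
      block a n = ∑ i ∈ Finset.range m, s ^ i • a (m * n + i) := by
    simp [block]
  refine ⟨L ∘ₗ block, fun a ↦ ?_⟩
  let a' : ℕ → C := fun n ↦ a (n + 1)
  let c : ℕ → C := fun n ↦ a (m * n)
  have block_eq : block a = c - s ^ m • (fun n ↦ c (n + 1)) + s • block a' := by
    ext n
    have sum_shift := (Finset.sum_range_succ (fun i ↦ s ^ i • a (m * n + i)) m).symm.trans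
      (Finset.sum_range_succ' _ m)
    simp only [pow_zero, add_zero, one_smul, block_apply, mul_add, mul_one, Pi.add_apply,
      Pi.sub_apply, Pi.smul_apply, add_assoc, Finset.smul_sum, smul_smul, ← pow_succ', c, a']
      at sum_shift ⊢
    linear_combination (norm := module) sum_shift
  calc L (block a)
    _ = L c - s ^ m • L (fun n ↦ c (n + 1)) + s • L (block a') := by
      rw [block_eq, map_add, map_sub, map_smul, map_smul]
    _ = a 0 + s • L (block a') := by simp [hL c, c]

lemma add (hs : HasPowerSummation s C) (ht : HasPowerSummation t C) :
    HasPowerSummation (s + t) C := by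
  obtain ⟨L, hL⟩ := hs
  obtain ⟨M, hM⟩ := ht
  let rowSum : (ℕ → C) →ₗ[R] ℕ → C := LinearMap.pi fun i ↦ M ∘ₗ binomialRow R C i
  refine ⟨L ∘ₗ rowSum, fun a ↦ ?_⟩
  let a' : ℕ → C := fun n ↦ a (n + 1)
  have rowSum_zero : rowSum a 0 = a 0 + t • rowSum a' 0 := by
    change M (binomialRow R C 0 a) = a 0 + t • M (binomialRow R C 0 a')
    rw [binomialRow_zero, binomialRow_zero, hM a]
  have rowSum_succ (i : ℕ) : rowSum a (i + 1) = rowSum a' i + t • rowSum a' (i + 1) := by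
    calc M (binomialRow R C (i + 1) a)
      _ = a' i + t • M (fun j ↦ binomialRow R C (i + 1) a (j + 1)) := by
        rw [hM, binomialRow_apply_zero]
      _ = a' i + t • M ((fun j ↦ binomialRow R C i a' (j + 1)) + binomialRow R C (i + 1) a') := by
        congr 3
        ext j
        exact binomialRow_succ_apply_succ i a j
      _ = M (binomialRow R C i a') + t • M (binomialRow R C (i + 1) a') := by
        rw [hM (binomialRow R C i a'), binomialRow_apply_zero, map_add, smul_add, add_assoc]
  calc L (rowSum a)
    _ = rowSum a 0 + s • L (fun i ↦ rowSum a (i + 1)) := hL _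
    _ = a 0 + t • rowSum a' 0 + s • L (rowSum a' + t • fun i ↦ rowSum a' (i + 1)) := by
      rw [rowSum_zero, funext rowSum_succ]
      rfl
    _ = a 0 + s • L (rowSum a') + t • (rowSum a' 0 + s • L (fun i ↦ rowSum a' (i + 1))) := by
      rw [map_add, map_smul]
      module
    _ = a 0 + (s + t) • L (rowSum a') := by rw [← hL, add_smul, add_assoc]

end HasPowerSummation

/-- The ideal of all `s` admitting an `s`-power infinite summation on `C`. -/
def powerSummationIdeal (R C : Type*) [CommRing R] [AddCommGroup C] [Module R C] : Ideal R where
  carrier := {s | HasPowerSummation s C}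
  add_mem' := HasPowerSummation.add
  zero_mem' := HasPowerSummation.zero R C
  smul_mem' r _ := HasPowerSummation.mul_left r

lemma powerSummationIdeal_isRadical : (powerSummationIdeal R C).IsRadical := by
  rintro s ⟨m, hm⟩
  exact HasPowerSummation.of_pow m hm

/-- The operator `(bₙ) ↦ (bₙ - s bₙ₊₁)` on sequences in `C`. -/
def telescope (s : R) (C : Type*) [AddCommGroup C] [Module R C] : (ℕ → C) →ₗ[R] ℕ → C :=
  LinearMap.id - s • LinearMap.funLeft R C Nat.succ

lemma telescope_apply (s : R) (b : ℕ → C) (n : ℕ) :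
    telescope s C b n = b n - s • b (n + 1) := rfl

lemma HasPowerSummation.bijective_telescope {s : R} (hs : HasPowerSummation s C) :
    Function.Bijective (telescope s C) := by
  obtain ⟨L, hL⟩ := hs
  let tailSum (a : ℕ → C) (k : ℕ) : C := L fun n ↦ a (k + n)
  have tailSum_sub (a : ℕ → C) (k : ℕ) : tailSum a k - s • tailSum a (k + 1) = a k := by
    rw [sub_eq_iff_eq_add]
    simpa only [tailSum, add_zero, ← add_assoc, add_right_comm k 1] using hL fun n ↦ a (k + n)
  refine Function.bijective_iff_has_inverse.2 ⟨tailSum, fun b ↦ ?_, fun a ↦ funext (tailSum_sub a)⟩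
  ext k
  calc tailSum (telescope s C b) k
    _ = tailSum b k - s • tailSum b (k + 1) := by
      rw [← map_smul, ← map_sub]
      refine congrArg L (funext fun n ↦ ?_)
      simp [telescope_apply, add_right_comm k 1]
    _ = b k := tailSum_sub b k

lemma hasPowerSummation_iff_bijective_telescope {s : R} :
    HasPowerSummation s C ↔ Function.Bijective (telescope s C) := by
  refine ⟨HasPowerSummation.bijective_telescope, fun h ↦ ?_⟩
  let e := LinearEquiv.ofBijective (telescope s C) h
  refine ⟨LinearMap.proj 0 ∘ₗ e.symm.toLinearMap, e.surjective.forall.2 fun b ↦ ?_⟩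
  have e_tail : (fun n ↦ e b (n + 1)) = e fun n ↦ b (n + 1) := rfl
  calc e.symm (e b) 0
    _ = e b 0 + s • b 1 := by simp [e, telescope_apply]
    _ = e b 0 + s • e.symm (fun n ↦ e b (n + 1)) 0 := by rw [e_tail, e.symm_apply_apply]

end PowerSummation

section ExtOfShortExact

open Limits

universe v u

variable {A : Type u} [Category.{v} A] [Abelian A]

lemma surjective_precomp_of_shortExact {S T : ShortComplex A} (hS : S.ShortExact)
    (hT : T.ShortExact) [Projective S.X₂] [Projective T.X₂] (e : S.X₃ ≅ T.X₃) {Y : A}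
    (h : Function.Surjective fun g : T.X₂ ⟶ Y ↦ T.f ≫ g) :
    Function.Surjective fun g : S.X₂ ⟶ Y ↦ S.f ≫ g := by
  have := hS.mono_f
  have := hS.epi_g
  have := hT.mono_f
  have := hT.epi_g
  let φ : S.X₂ ⟶ T.X₂ := Projective.factorThru (S.g ≫ e.hom) T.g
  let ψ : T.X₂ ⟶ S.X₂ := Projective.factorThru (T.g ≫ e.inv) S.g
  have hφ : φ ≫ T.g = S.g ≫ e.hom := Projective.factorThru_comp _ _
  have hψ : ψ ≫ S.g = T.g ≫ e.inv := Projective.factorThru_comp _ _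
  obtain ⟨φ', hφ'⟩ : ∃ φ' : S.X₁ ⟶ T.X₁, φ' ≫ T.f = S.f ≫ φ :=
    ⟨_, hT.exact.lift_f (S.f ≫ φ) (by simp [hφ])⟩
  obtain ⟨ψ', hψ'⟩ : ∃ ψ' : T.X₁ ⟶ S.X₁, ψ' ≫ S.f = T.f ≫ ψ :=
    ⟨_, hS.exact.lift_f (T.f ≫ ψ) (by simp [hψ])⟩
  obtain ⟨η, hη⟩ : ∃ η : S.X₂ ⟶ S.X₁, η ≫ S.f = 𝟙 S.X₂ - φ ≫ ψ :=
    ⟨_, hS.exact.lift_f (𝟙 S.X₂ - φ ≫ ψ) (by simp [hψ, reassoc_of% hφ])⟩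
  -- Hence precomposition with `φ' ≫ ψ'` is the identity modulo the image of `g ↦ S.f ≫ g`.
  have hη' : S.f ≫ η = 𝟙 S.X₁ - φ' ≫ ψ' := by
    simp [← cancel_mono S.f, hη, hψ', reassoc_of% hφ']
  intro k
  obtain ⟨g, hg : T.f ≫ g = ψ' ≫ k⟩ := h (ψ' ≫ k)
  exact ⟨φ ≫ g + η ≫ k, by simp [← reassoc_of% hφ', hg, reassoc_of% hη']⟩

variable {k : Type*} [Ring k] [Linear k A] [EnoughProjectives A]

lemma isZero_ext_one_iff_of_projectiveResolution {X : A} (P : ProjectiveResolution X) (Y : A) :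
    IsZero (((Ext k A 1).obj (op X)).obj Y) ↔
      ∀ f : P.complex.X 1 ⟶ Y, P.complex.d 2 1 ≫ f = 0 → ∃ g, P.complex.d 1 0 ≫ g = f := by
  rw [(P.isoExt 1 Y).isZero_iff, ← HomologicalComplex.exactAt_iff_isZero_homology,
    HomologicalComplex.exactAt_iff' _ 0 1 2 (by simp) (by simp), ShortComplex.moduleCat_exact_iff]
  exact Iff.rfl

lemma isZero_ext_one_iff_surjective_kernel_ι_precomp {X : A} (P : ProjectiveResolution X) (Y : A) :
    IsZero (((Ext k A 1).obj (op X)).obj Y) ↔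
      Function.Surjective fun g : P.complex.X 0 ⟶ Y ↦ kernel.ι (P.π.f 0) ≫ g := by
  rw [isZero_ext_one_iff_of_projectiveResolution P Y]
  let δ : P.complex.X 1 ⟶ kernel (P.π.f 0) :=
    kernel.lift (P.π.f 0) (P.complex.d 1 0) P.complex_d_comp_π_f_zero
  have hδ : δ ≫ kernel.ι (P.π.f 0) = P.complex.d 1 0 := kernel.lift_ι _ _ _
  have : Epi δ := P.exact₀.epi_kernelLift
  have d_comp_δ : P.complex.d 2 1 ≫ δ = 0 := by
    rw [← cancel_mono (kernel.ι (P.π.f 0)), Category.assoc, hδ, P.complex.d_comp_d, zero_comp]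
  let ν : ShortComplex.mk _ δ d_comp_δ ⟶ .mk _ _ (P.complex.d_comp_d 2 1 0) :=
    { τ₁ := 𝟙 _, τ₂ := 𝟙 _, τ₃ := kernel.ι (P.π.f 0) }
  have exact_d_δ : (ShortComplex.mk _ δ d_comp_δ).Exact := by
    have : Epi ν.τ₁ := inferInstanceAs (Epi (𝟙 _))
    have : IsIso ν.τ₂ := inferInstanceAs (IsIso (𝟙 _))
    have : Mono ν.τ₃ := inferInstanceAs (Mono (kernel.ι _))
    exact (ShortComplex.exact_iff_of_epi_of_isIso_of_mono ν).2 (P.exact_succ 0)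
  constructor
  · intro h f
    obtain ⟨g, hg⟩ := h (δ ≫ f) (by rw [reassoc_of% d_comp_δ, zero_comp])
    exact ⟨g, by rwa [← cancel_epi δ, reassoc_of% hδ]⟩
  · intro h f hf
    obtain ⟨g, hg : kernel.ι (P.π.f 0) ≫ g = exact_d_δ.desc f hf⟩ := h (exact_d_δ.desc f hf)
    exact ⟨g, by rw [← hδ, Category.assoc, hg]; exact exact_d_δ.g_desc f hf⟩

lemma isZero_ext_one_iff_of_shortExact {S : ShortComplex A} (hS : S.ShortExact)
    [Projective S.X₂] (Y : A) :
    IsZero (((Ext k A 1).obj (op S.X₃)).obj Y) ↔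
      Function.Surjective fun g : S.X₂ ⟶ Y ↦ S.f ≫ g := by
  let P := projectiveResolution S.X₃
  let T : ShortComplex A := .mk (kernel.ι (P.π.f 0)) (P.π.f 0) (kernel.condition _)
  have hT : T.ShortExact :=
    { exact := ShortComplex.exact_kernel _
      mono_f := inferInstanceAs (Mono (kernel.ι _))
      epi_g := inferInstanceAs (Epi (P.π.f 0)) }
  have : Projective T.X₂ := P.projective 0
  rw [isZero_ext_one_iff_surjective_kernel_ι_precomp P Y]
  exact ⟨surjective_precomp_of_shortExact hS hT (Iso.refl _),
    surjective_precomp_of_shortExact hT hS (Iso.refl _)⟩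

end ExtOfShortExact

section HomAndExt

universe u

lemma subsingleton_linearMap_iff_injective_lcomp_s8 {R K F M C : Type*} [CommRing R]
    [AddCommGroup K] [AddCommGroup F] [AddCommGroup M] [AddCommGroup C] [Module R K] [Module R F]
    [Module R M] [Module R C] {i : K →ₗ[R] F} {q : F →ₗ[R] M} (hiq : Function.Exact i q)
    (hq : Function.Surjective q) :
    Subsingleton (M →ₗ[R] C) ↔ Function.Injective (LinearMap.lcomp R C i) := by
  have lcomp_exact : Function.Exact (LinearMap.lcomp R C q) (LinearMap.lcomp R C i) :=
    LinearMap.exact_lcomp_of_exact_of_surjective C hiq hq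
  have lcomp_q_injective : Function.Injective (LinearMap.lcomp R C q) :=
    LinearMap.lcomp_injective_of_surjective q hq
  rw [← LinearMap.ker_eq_bot, lcomp_exact.linearMap_ker_eq, LinearMap.range_eq_bot]
  constructor
  · intro _
    exact Subsingleton.elim _ _
  · intro h
    exact ⟨fun f g ↦ lcomp_q_injective (by simp [h])⟩

lemma subsingleton_ext_one_iff_surjective_lcomp_s8 {R K F M : Type u} [CommRing R]
    [AddCommGroup K] [AddCommGroup F] [AddCommGroup M] [Module R K] [Module R F] [Module R M]
    [Module.Projective R F] {i : K →ₗ[R] F} {q : F →ₗ[R] M} (hi : Function.Injective i)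
    (hiq : Function.Exact i q) (hq : Function.Surjective q) (C : Type u)
    [AddCommGroup C] [Module R C] :
    Subsingleton (((Ext R (ModuleCat R) 1).obj (op (.of R M))).obj (.of R C)) ↔
      Function.Surjective (LinearMap.lcomp R C i) := by
  let S := ModuleCat.shortComplexOfCompEqZero i q hiq.linearMap_comp_eq_zero
  have hS : S.ShortExact := ModuleCat.shortComplex_shortExact S hiq hi hq
  have : Projective S.X₂ := (IsProjective.iff_projective F).1 inferInstance
  rw [← ModuleCat.isZero_iff_subsingleton]
  refine (isZero_ext_one_iff_of_shortExact hS (.of R C)).trans ?_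
  have hom_comp : (fun g : S.X₂ ⟶ .of R C ↦ S.f ≫ g) =
      ModuleCat.homEquiv.symm ∘ LinearMap.lcomp R C i ∘ ModuleCat.homEquiv := rfl
  rw [hom_comp, EquivLike.comp_surjective, EquivLike.surjective_comp]

end HomAndExt

section Localization

open Polynomial

variable {R : Type*} [CommRing R] (s : R)

lemma mulLeft_one_sub_C_mul_X_injective :
    Function.Injective (LinearMap.mulLeft R (1 - C s * X)) := by
  have : 1 - C s * X ∈ nonZeroDivisors R[X] := mem_nonzeroDivisors_of_coeff_mem 0 (by simp)
  exact fun p q ↦ (mul_cancel_left_mem_nonZeroDivisors this).1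

lemma awayEquivAdjoin_symm_mk (p : R[X]) :
    (Localization.awayEquivAdjoin s).symm (AdjoinRoot.mk (C s * X - 1) p) =
      aeval (IsLocalization.Away.invSelf s : Localization.Away s) p := rfl

lemma aeval_invSelf_surjective :
    Function.Surjective (aeval (R := R) (IsLocalization.Away.invSelf s : Localization.Away s)) :=
  (Localization.awayEquivAdjoin s).symm.surjective.comp AdjoinRoot.mk_surjective

lemma exact_mulLeft_aeval_invSelf :
    Function.Exact (LinearMap.mulLeft R (1 - C s * X))
      (aeval (IsLocalization.Away.invSelf s : Localization.Away s)) := by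
  intro p
  calc aeval (IsLocalization.Away.invSelf s : Localization.Away s) p = 0
    _ ↔ AdjoinRoot.mk (C s * X - 1) p = 0 := by
      rw [← awayEquivAdjoin_symm_mk, EmbeddingLike.map_eq_zero_iff]
    _ ↔ 1 - C s * X ∣ p := by rw [AdjoinRoot.mk_eq_zero, ← neg_sub, neg_dvd]
    _ ↔ p ∈ Set.range (LinearMap.mulLeft R (1 - C s * X)) := by simp [dvd_def, eq_comm]

lemma bijective_lcomp_mulLeft_iff_bijective_telescope {M : Type*} [AddCommGroup M] [Module R M] :
    Function.Bijective (LinearMap.lcomp R M (.mulLeft R (1 - C s * X))) ↔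
      Function.Bijective (telescope s M) := by
  let e : (R[X] →ₗ[R] M) ≃ₗ[R] (ℕ → M) := ((basisMonomials R).constr R).symm
  have e_apply (f : R[X] →ₗ[R] M) (n : ℕ) : e f n = f (X ^ n) := by
    simp [e, Module.Basis.constr, X_pow_eq_monomial]
  have e_lcomp : e ∘ LinearMap.lcomp R M (.mulLeft R (1 - C s * X)) = telescope s M ∘ e := by
    ext f n
    have : (1 - C s * X) * X ^ n = X ^ n - s • X ^ (n + 1) := by
      rw [smul_eq_C_mul]
      ring
    simp [telescope_apply, e_apply, this]
  rw [← EquivLike.comp_bijective _ e, e_lcomp, EquivLike.bijective_comp]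

end Localization

universe u

lemma subsingleton_hom_and_ext_away_iff_hasPowerSummation {R : Type u} [CommRing R] (s : R)
    (C : Type u) [AddCommGroup C] [Module R C] :
    (Subsingleton (Localization.Away s →ₗ[R] C) ∧
      Subsingleton (((Ext R (ModuleCat R) 1).obj (op (.of R (Localization.Away s)))).obj
        (.of R C))) ↔ HasPowerSummation s C := by
  let q : Polynomial R →ₗ[R] Localization.Away s :=
    (Polynomial.aeval (IsLocalization.Away.invSelf s)).toLinearMap
  have exact_q : Function.Exact _ q := exact_mulLeft_aeval_invSelf s
  have q_surjective : Function.Surjective q := aeval_invSelf_surjective s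
  rw [subsingleton_linearMap_iff_injective_lcomp_s8 exact_q q_surjective,
    subsingleton_ext_one_iff_surjective_lcomp_s8 (mulLeft_one_sub_C_mul_X_injective s) exact_q
      q_surjective, hasPowerSummation_iff_bijective_telescope,
    ← bijective_lcomp_mulLeft_iff_bijective_telescope, Function.Bijective]

/-- For a commutative ring `R` and an `R`-module `C`, the set
`I_C = { s ∈ R : C is an s-contramodule }` is a radical ideal of `R`. -/
theorem exists_radical_ideal_of_contramodule_elements
    (R : Type) [CommRing R] (C : Type) [AddCommGroup C] [Module R C] :
    ∃ I : Ideal R, (∀ s : R, s ∈ I ↔ IsContramodule R s C) ∧ I.IsRadical :=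
  ⟨powerSummationIdeal R C,
    fun s ↦ (subsingleton_hom_and_ext_away_iff_hasPowerSummation s C).symm,
    powerSummationIdeal_isRadical⟩
end

section
/- Let R be a commutative ring, s ∈ R an element that is not a zero-divisor, and C an R-module. Then the cokernel of the map φ : Π_{n≥1} C → Π_{n≥0} C, sending (c₁,c₂,…) to (bₙ) with bₙ = cₙ − s·cₙ₊₁ (where c₀ = 0), is naturally isomorphic to Ext¹_R(R[s⁻¹]/R, C). -/
open CategoryTheory Opposite

/-- The map `φ : Π_{n≥1} C → Π_{n≥0} C` sending `(c₁, c₂, …)` to `(bₙ)` with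
`bₙ = cₙ - s·cₙ₊₁` (where `c₀ = 0`). Here the domain sequence `c : ℕ → C` represents
`(c₁, c₂, …)`, i.e. `c i = c_{i+1}`. -/
def phiMap (R : Type) [CommRing R] (C : Type) [AddCommGroup C] [Module R C] (s : R) :
    (ℕ → C) →ₗ[R] (ℕ → C) where
  toFun c := fun n => (if n = 0 then 0 else c (n - 1)) - s • c n
  map_add' c d := by
    funext n
    by_cases h : n = 0 <;> simp [h, smul_add] <;> abel
  map_smul' r c := by
    funext n
    by_cases h : n = 0 <;> simp [h, smul_sub, smul_comm r s]

/-!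
The classes of `s⁻¹, s⁻², …` generate `R[s⁻¹]/R`, subject to the relations `s · s⁻¹ = 0` and
`s · s⁻ⁿ⁻¹ = s⁻ⁿ` only. This is a free resolution `0 ⟶ R^(ℕ) ⟶ R^(ℕ) ⟶ R[s⁻¹]/R ⟶ 0` of length one,
and `Hom(-, C)` turns its differential into `φ`, so that the cokernel of `φ` is `Ext¹`. Exactness of
the resolution comes from the telescoping identity
`∑_{i < n} (aᵢ₊₁ - s aᵢ) / sⁱ⁺¹ = aₙ / sⁿ - a₀` in `R[s⁻¹]`.
-/

universe u

section TwoTermComplex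

open Limits ZeroObject

/-- The chain complex `⋯ ⟶ 0 ⟶ X ⟶ Y` given by a morphism `f : X ⟶ Y`, with `Y` in degree `0`. -/
noncomputable def twoTermComplex {V : Type*} [Category* V] [HasZeroMorphisms V] [HasZeroObject V]
    {X Y : V} (f : X ⟶ Y) : ChainComplex V ℕ :=
  ChainComplex.mk' Y X f fun _ => ⟨0, 0, zero_comp⟩

namespace twoTermComplex

section

variable {V : Type*} [Category* V] [HasZeroMorphisms V] [HasZeroObject V] {X Y : V} (f : X ⟶ Y)

lemma d_one_zero : (twoTermComplex f).d 1 0 = f :=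
  ChainComplex.mk'_d_1_0 ..

lemma isZero_X_add_two (n : ℕ) : IsZero ((twoTermComplex f).X (n + 2)) :=
  (isZero_zero V).of_iso (ChainComplex.mk'XIso _ _ _ _ n)

end

variable {A : Type*} [Category* A] [Abelian A]

lemma exactAt_succ {X Y : A} (f : X ⟶ Y) [Mono f] (n : ℕ) :
    (twoTermComplex f).ExactAt (n + 1) := by
  rw [HomologicalComplex.exactAt_iff' _ (n + 2) (n + 1) n (by simp) (by simp)]
  cases n with
  | zero =>
    refine (ShortComplex.exact_iff_mono ((twoTermComplex f).sc' 2 1 0)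
      ((isZero_X_add_two f 0).eq_of_src _ _)).2 ?_
    change Mono ((twoTermComplex f).d 1 0)
    rwa [d_one_zero]
  | succ n => exact ShortComplex.exact_of_isZero_X₂ _ (isZero_X_add_two f n)

/-- The morphism from `⋯ ⟶ 0 ⟶ S.X₁ ⟶ S.X₂` to `S.X₃`, placed in degree `0`, given by `S.g`. -/
noncomputable def augmentation (S : ShortComplex A) :
    twoTermComplex S.f ⟶ (ChainComplex.single₀ A).obj S.X₃ :=
  (ChainComplex.toSingle₀Equiv _ _).symm ⟨S.g, by rw [d_one_zero]; exact S.zero⟩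

variable {S : ShortComplex A}

lemma quasiIso_augmentation (hS : S.ShortExact) : QuasiIso (augmentation S) where
  quasiIsoAt n := by
    have := hS.mono_f
    cases n with
    | zero =>
      rw [ChainComplex.quasiIsoAt₀_iff, ShortComplex.quasiIso_iff_of_zeros' _ rfl rfl rfl]
      refine (ShortComplex.exact_and_epi_g_iff_of_iso (S₂ := S) ?_).2 ⟨hS.exact, hS.epi_g⟩
      refine ShortComplex.isoMk (Iso.refl _) (Iso.refl _) (Iso.refl _) ?_ ?_
      · exact (Category.id_comp _).trans ((d_one_zero S.f).symm.trans (Category.comp_id _).symm)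
      · refine (Category.id_comp _).trans (Eq.trans ?_ (Category.comp_id _).symm)
        exact (ChainComplex.toSingle₀Equiv_symm_apply_f_zero (C := twoTermComplex S.f) S.g _).symm
    | succ n =>
      rw [quasiIsoAt_iff_exactAt' _ _ (ChainComplex.exactAt_succ_single_obj _ _)]
      exact exactAt_succ S.f n

/-- The projective resolution `0 ⟶ S.X₁ ⟶ S.X₂` of `S.X₃` given by a short exact sequence `S` whose
first two terms are projective. -/
noncomputable def projectiveResolution (hS : S.ShortExact) [Projective S.X₁] [Projective S.X₂] :
    ProjectiveResolution S.X₃ where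
  complex := twoTermComplex S.f
  projective
    | 0 => ‹Projective S.X₂›
    | 1 => ‹Projective S.X₁›
    | n + 2 => .of_iso (isZero_X_add_two S.f n).isoZero.symm inferInstance
  π := augmentation S
  quasiIso := quasiIso_augmentation hS

end twoTermComplex

end TwoTermComplex

section ExtOne

variable {R : Type*} [Ring R]

/-- When the second map of a short complex of modules vanishes, its homology is the cokernel of the
first map. -/
noncomputable def homologyEquivQuotientRange (S : ShortComplex (ModuleCat R)) (hg : S.g = 0) :
    S.homology ≃ₗ[R] S.X₂ ⧸ LinearMap.range S.f.hom :=
  (S.asIsoHomologyι hg ≪≫ S.moduleCatOpcyclesIso).toLinearEquiv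

variable {A : Type*} [Category* A] [Abelian A] [Linear R A] [EnoughProjectives A]

/-- Dimension shifting: for a short exact sequence `0 ⟶ X₁ ⟶ X₂ ⟶ X₃ ⟶ 0` with `X₁` and `X₂`
projective, `Ext¹(X₃, Y)` is the cokernel of `Hom(X₂, Y) ⟶ Hom(X₁, Y)`. -/
noncomputable def extOneEquivQuotientRange {S : ShortComplex A} (hS : S.ShortExact)
    [Projective S.X₁] [Projective S.X₂] (Y : A) :
    ((Ext R A 1).obj (op S.X₃)).obj Y ≃ₗ[R]
      (S.X₁ ⟶ Y) ⧸ LinearMap.range (Linear.leftComp R Y S.f) :=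
  let P := twoTermComplex.projectiveResolution hS
  let K := P.complex.linearYonedaObj R Y
  have hg : (K.sc' 0 1 2).g = 0 := by
    ext (x : _ ⟶ _)
    exact (twoTermComplex.isZero_X_add_two S.f 0).eq_of_src (Y := Y) _ _
  have hf : (K.sc' 0 1 2).f.hom = Linear.leftComp R Y S.f := by
    ext (x : _ ⟶ _)
    exact congrArg (· ≫ x) (twoTermComplex.d_one_zero S.f)
  (P.isoExt 1 Y ≪≫ K.homologyIsoSc' 0 1 2 (by simp) (by simp)).toLinearEquiv ≪≫ₗ
    homologyEquivQuotientRange _ hg ≪≫ₗ Submodule.quotEquivOfEq _ _ (congrArg LinearMap.range hf)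

end ExtOne

section AwayResolution

open IsLocalization.Away (invSelf mul_invSelf)

variable {R : Type*} [CommRing R] (s : R)

/-- The map `(a₀, a₁, …) ↦ (a₁ - s a₀, a₂ - s a₁, …)` on finitely supported sequences. In terms of
the standard basis, `e₀ ↦ -s e₀` and `eₙ₊₁ ↦ eₙ - s eₙ₊₁`. -/
noncomputable def shiftSub : (ℕ →₀ R) →ₗ[R] (ℕ →₀ R) :=
  Finsupp.lcomapDomain Nat.succ Nat.succ_injective - s • LinearMap.id

lemma shiftSub_apply (a : ℕ →₀ R) (n : ℕ) : shiftSub s a n = a (n + 1) - s * a n := rfl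

lemma shiftSub_single_one (n : ℕ) : shiftSub s (Finsupp.single n 1) =
    (if n = 0 then 0 else Finsupp.single (n - 1) 1) - s • Finsupp.single n 1 := by
  ext m
  rcases n with _ | n <;> simp [shiftSub_apply, Finsupp.single_apply]

lemma llift_symm_comp_shiftSub {C : Type*} [AddCommGroup C] [Module R C] (f : (ℕ →₀ R) →ₗ[R] C)
    (n : ℕ) :
    (Finsupp.llift C R R ℕ).symm (f ∘ₗ shiftSub s) n =
      (if n = 0 then 0 else (Finsupp.llift C R R ℕ).symm f (n - 1)) -
        s • (Finsupp.llift C R R ℕ).symm f n := by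
  simp [shiftSub_single_one, apply_ite f, -Finsupp.smul_single]

variable (A : Type*) [CommRing A] [Algebra R A] [IsLocalization.Away s A]

/-- The map `(b₀, b₁, …) ↦ ∑ bₙ / sⁿ⁺¹` from finitely supported sequences to `R[s⁻¹]`. -/
noncomputable def invPowSum : (ℕ →₀ R) →ₗ[R] A :=
  Finsupp.linearCombination R fun n => (invSelf s : A) ^ (n + 1)

variable {A}

lemma smul_invSelf_pow_succ (r : R) (n : ℕ) :
    (s * r) • (invSelf s : A) ^ (n + 1) = r • (invSelf s : A) ^ n := by
  have h := mul_invSelf (S := A) s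
  simp only [Algebra.smul_def, map_mul, pow_succ]
  linear_combination algebraMap R A r * invSelf s ^ n * h

lemma sum_range_sub_smul_invSelf_pow (a : ℕ → R) (n : ℕ) :
    ∑ i ∈ Finset.range n, (a (i + 1) - s * a i) • (invSelf s : A) ^ (i + 1) =
      a n • (invSelf s : A) ^ n - algebraMap R A (a 0) := by
  simp only [sub_smul, smul_invSelf_pow_succ]
  simpa [Algebra.algebraMap_eq_smul_one] using
    Finset.sum_range_sub (fun i => a i • (invSelf s : A) ^ i) n

lemma exists_forall_ge_apply_eq_zero {M : Type*} [Zero M] (a : ℕ →₀ M) : ∃ N, ∀ n ≥ N, a n = 0 := by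
  obtain ⟨N, hN⟩ := a.support.exists_nat_subset_range
  refine ⟨N, fun n hn => Finsupp.notMem_support_iff.1 fun h => ?_⟩
  exact hn.not_gt (Finset.mem_range.1 (hN h))

lemma invPowSum_eq_sum_range {b : ℕ →₀ R} {N : ℕ} (hb : ∀ n ≥ N, b n = 0) :
    invPowSum s A b = ∑ i ∈ Finset.range N, b i • (invSelf s : A) ^ (i + 1) := by
  rw [invPowSum, Finsupp.linearCombination_apply]
  refine Finsupp.sum_of_support_subset _ (fun n hn => ?_) _ fun _ _ => zero_smul _ _
  contrapose! hn
  simpa using hb n (by simpa using hn)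

lemma invPowSum_shiftSub (a : ℕ →₀ R) : invPowSum s A (shiftSub s a) = -algebraMap R A (a 0) := by
  obtain ⟨N, hN⟩ := exists_forall_ge_apply_eq_zero a
  have hshift : ∀ n ≥ N, shiftSub s a n = 0 := fun n hn => by
    simp [shiftSub_apply, hN n hn, hN (n + 1) (by omega)]
  simp only [invPowSum_eq_sum_range s hshift, shiftSub_apply, sum_range_sub_smul_invSelf_pow,
    hN N le_rfl, zero_smul, zero_sub]

lemma invPowSum_surjective : Function.Surjective (invPowSum s A) := by
  intro z
  obtain ⟨n, r, h⟩ := IsLocalization.Away.surj s z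
  refine ⟨Finsupp.single n (s * r), ?_⟩
  have hpow : (algebraMap R A s * invSelf s) ^ n = 1 := by rw [mul_invSelf, one_pow]
  rw [invPowSum, Finsupp.linearCombination_single, smul_invSelf_pow_succ, Algebra.smul_def, ← h]
  linear_combination z * hpow

variable {s}

lemma algebraMap_injective_of_mem_nonZeroDivisors (hs : s ∈ nonZeroDivisors R) :
    Function.Injective (algebraMap R A) :=
  IsLocalization.injective A (Submonoid.powers_le.2 hs)

lemma shiftSub_injective (hs : s ∈ nonZeroDivisors R) : Function.Injective (shiftSub s) := by
  refine (injective_iff_map_eq_zero _).2 fun a ha => Finsupp.ext fun n => ?_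
  induction n with
  | zero =>
    have h := invPowSum_shiftSub (A := Localization.Away s) s a
    rw [ha, map_zero, zero_eq_neg] at h
    exact algebraMap_injective_of_mem_nonZeroDivisors hs (h.trans (map_zero _).symm)
  | succ n ih =>
    have h : a (n + 1) - s * a n = 0 := DFunLike.congr_fun ha n
    simpa [ih] using h

lemma eq_zero_of_smul_invSelf_pow_eq_zero (hs : s ∈ nonZeroDivisors R) {r : R} {n : ℕ}
    (h : r • (invSelf s : A) ^ n = 0) : r = 0 := by
  have hunit : IsUnit (invSelf s : A) := .of_mul_eq_one_right _ (mul_invSelf s)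
  rw [Algebra.smul_def, (hunit.pow n).mul_left_eq_zero] at h
  exact (injective_iff_map_eq_zero _).1 (algebraMap_injective_of_mem_nonZeroDivisors hs) r h

lemma exists_shiftSub_eq (hs : s ∈ nonZeroDivisors R) {b : ℕ →₀ R} {r : R}
    (h : invPowSum s A b = algebraMap R A r) : ∃ a, shiftSub s a = b := by
  obtain ⟨N, hN⟩ := exists_forall_ge_apply_eq_zero b
  -- `shiftSub s a = b` forces `aₙ / sⁿ = a₀ + ∑_{i < n} bᵢ / sⁱ⁺¹`, which vanishes for large `n`
  -- exactly when `a₀ = -r`.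
  let a : ℕ → R := Nat.rec (-r) fun n x => s * x + b n
  have ha_start : a 0 = -r := rfl
  have ha_succ (n : ℕ) : a (n + 1) - s * a n = b n := add_sub_cancel_left _ _
  have ha_zero (n : ℕ) (hn : n ≥ N) : a n = 0 := by
    have hsum := sum_range_sub_smul_invSelf_pow (A := A) s a n
    simp only [ha_succ] at hsum
    rw [← invPowSum_eq_sum_range s fun m hm => hN m (hn.trans hm), h, ha_start, map_neg,
      sub_neg_eq_add, right_eq_add] at hsum
    exact eq_zero_of_smul_invSelf_pow_eq_zero hs hsum
  refine ⟨Finsupp.onFinset (Finset.range N) a fun n hn => ?_, Finsupp.ext ha_succ⟩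
  contrapose! hn
  exact ha_zero n (by simpa using hn)

lemma exact_shiftSub_mkQ_comp_invPowSum (hs : s ∈ nonZeroDivisors R) :
    Function.Exact (shiftSub s)
      ((LinearMap.range (Algebra.linearMap R A)).mkQ ∘ₗ invPowSum s A) := by
  intro b
  rw [LinearMap.comp_apply, Submodule.mkQ_apply, Submodule.Quotient.mk_eq_zero]
  constructor
  · rintro ⟨r, hr⟩
    exact exists_shiftSub_eq hs hr.symm
  · rintro ⟨a, rfl⟩
    exact ⟨-a 0, by simp [invPowSum_shiftSub]⟩

end AwayResolution

section AwayShortComplex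

variable {R : Type u} [CommRing R] {s : R} (A : Type u) [CommRing A] [Algebra R A]
  [IsLocalization.Away s A]

/-- The free resolution `0 ⟶ R^(ℕ) ⟶ R^(ℕ) ⟶ R[s⁻¹]/R ⟶ 0`, as a short complex. -/
noncomputable def awayShortComplex (hs : s ∈ nonZeroDivisors R) : ShortComplex (ModuleCat.{u} R) :=
  ModuleCat.shortComplexOfCompEqZero (shiftSub s)
    ((LinearMap.range (Algebra.linearMap R A)).mkQ ∘ₗ invPowSum s A)
    (exact_shiftSub_mkQ_comp_invPowSum hs).linearMap_comp_eq_zero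

instance (hs : s ∈ nonZeroDivisors R) : Projective (awayShortComplex A hs).X₁ :=
  ModuleCat.projective_of_free (M := .of R (ℕ →₀ R)) Finsupp.basisSingleOne

instance (hs : s ∈ nonZeroDivisors R) : Projective (awayShortComplex A hs).X₂ :=
  ModuleCat.projective_of_free (M := .of R (ℕ →₀ R)) Finsupp.basisSingleOne

lemma awayShortComplex_shortExact (hs : s ∈ nonZeroDivisors R) :
    (awayShortComplex A hs).ShortExact :=
  ModuleCat.shortComplex_shortExact _ (exact_shiftSub_mkQ_comp_invPowSum hs)
    (shiftSub_injective hs) ((Submodule.mkQ_surjective _).comp (invPowSum_surjective s))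

end AwayShortComplex

/-- The isomorphism between the cokernels of `f` and `g` induced by an isomorphism `(e₁, e₂)` from
`f` to `g` in the category of arrows. -/
def quotientRangeEquiv {R M N M' N' : Type*} [Ring R] [AddCommGroup M] [AddCommGroup N]
    [AddCommGroup M'] [AddCommGroup N'] [Module R M] [Module R N] [Module R M'] [Module R N']
    {f : M →ₗ[R] N} {g : M' →ₗ[R] N'} (e₁ : M ≃ₗ[R] M') (e₂ : N ≃ₗ[R] N')
    (h : ∀ x, e₂ (f x) = g (e₁ x)) : (N ⧸ LinearMap.range f) ≃ₗ[R] N' ⧸ LinearMap.range g :=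
  Submodule.Quotient.equiv _ _ e₂ <| by
    have hcomp : e₂.toLinearMap ∘ₗ f = g ∘ₗ e₁.toLinearMap := LinearMap.ext h
    rw [← LinearMap.range_comp, hcomp, LinearEquiv.range_comp]

theorem coker_phiMap_iso_ext1_general {R : Type u} [CommRing R] {s : R}
    (hs : s ∈ nonZeroDivisors R) (A : Type u) [CommRing A] [Algebra R A] [IsLocalization.Away s A]
    {C : Type u} [AddCommGroup C] [Module R C] (φ : (ℕ → C) →ₗ[R] (ℕ → C))
    (hφ : ∀ c n, φ c n = (if n = 0 then 0 else c (n - 1)) - s • c n) :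
    Nonempty (((ℕ → C) ⧸ LinearMap.range φ) ≃ₗ[R]
      ((Ext R (ModuleCat.{u} R) 1).obj
        (op (ModuleCat.of R (A ⧸ LinearMap.range (Algebra.linearMap R A))))).obj
          (ModuleCat.of R C)) := by
  let e : ((awayShortComplex A hs).X₁ ⟶ ModuleCat.of R C) ≃ₗ[R] (ℕ → C) :=
    ModuleCat.homLinearEquiv ≪≫ₗ (Finsupp.llift C R R ℕ).symm
  have he : ∀ f, e (Linear.leftComp R (ModuleCat.of R C) (awayShortComplex A hs).f f) = φ (e f) :=
    fun f => funext fun n => (llift_symm_comp_shiftSub s f.hom n).trans (hφ _ n).symm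
  exact ⟨(extOneEquivQuotientRange (awayShortComplex_shortExact A hs) (ModuleCat.of R C) ≪≫ₗ
    quotientRangeEquiv e e he).symm⟩

/-- Let `R` be a commutative ring, `s ∈ R` a nonzerodivisor and `C` an
`R`-module. The cokernel of `φ : Π_{n≥1} C → Π_{n≥0} C`, `(cₙ) ↦ (cₙ - s·cₙ₊₁)` (with
`c₀ = 0`), is naturally isomorphic to `Ext¹_R(R[s⁻¹]/R, C)`. -/
theorem coker_phiMap_iso_ext1
    (R : Type) [CommRing R] (s : R) (hs : s ∈ nonZeroDivisors R)
    (C : Type) [AddCommGroup C] [Module R C] :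
    Nonempty ((((ℕ → C) ⧸ LinearMap.range (phiMap R C s))) ≃ₗ[R]
      (((Ext R (ModuleCat R) 1).obj (op (ModuleCat.of R
        ((Localization.Away s) ⧸
          LinearMap.range (Algebra.linearMap R (Localization.Away s)))))).obj
        (ModuleCat.of R C))) :=
  coker_phiMap_iso_ext1_general hs _ (phiMap R C s) fun _ _ => rfl
end
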